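/- Let T1, T2, T3 be positive integers with gcd(T1,T2,T3) = 1, set T = T1+T2+T3−d12−d23−d13+1, and define the step function h_3 : ℝ → ℝ by h_3(t) = c_k for t ∈ [k, k+1) (k = 0, 1, …, T−1) and h_3(t) = 0 for t < 0 and t ≥ T, where c_k is the coefficient of X^k in P_3. Then ∫_0^T h_3(t) e^{2πi m t/(T1 T2 T3)} dt = 0 for every nonzero integer m such that at least one of T1T2, T2T3, T1T3 divides m. -/

import Mathlib

open Polynomial
open scoped Real

/-!
For `ω ≠ 0` and `z = exp ω`, the integral of `exp (ω t)` over `[k, k + 1]` is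
`z ^ k * ((z - 1) / ω)`, so the integral of the theorem equals `P₃(z) * ((z - 1) / ω)` and it
suffices to see that `P₃(z) = 0` when `z ≠ 1` and some `z ^ Tᵢ = 1`.

Since `1 - X ^ n` has only simple roots and `z ^ gcd(Tᵢ, Tⱼ) = 1` iff `z ^ Tᵢ = 1` and
`z ^ Tⱼ = 1`, the multiplicity of `z` in `P₃` is `s - s.choose 2`, where `s` is the number of `i`
with `z ^ Tᵢ = 1`. As `gcd(T₁, T₂, T₃) = 1` and `z ≠ 1`, here `s ≤ 2`, so the multiplicity is `1`
as soon as `s` is nonzero.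
-/

theorem pow_gcd_eq_one_iff {M : Type*} [Monoid M] {x : M} {m n : ℕ} :
    x ^ m.gcd n = 1 ↔ x ^ m = 1 ∧ x ^ n = 1 := by
  simp only [← orderOf_dvd_iff_pow_eq_one, Nat.dvd_gcd_iff]

theorem natDegree_one_sub_X_pow {R : Type*} [Ring R] [Nontrivial R] (n : ℕ) :
    (1 - X ^ n : R[X]).natDegree = n := by
  rw [← neg_sub, natDegree_neg, ← C_1, natDegree_X_pow_sub_C]

theorem one_sub_X_pow_ne_zero {R : Type*} [Ring R] [Nontrivial R] {n : ℕ} (hn : n ≠ 0) :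
    (1 - X ^ n : R[X]) ≠ 0 :=
  ne_zero_of_natDegree_gt ((natDegree_one_sub_X_pow (R := R) n).symm ▸ hn.bot_lt)

theorem add_natDegree_of_one_sub_X_pow_mul_eq {R : Type*} [CommRing R] [IsDomain R]
    {a b c d e f : ℕ} (ha : a ≠ 0) (hb : b ≠ 0) (hc : c ≠ 0) {P : R[X]}
    (hP : (1 - X ^ d) * (1 - X ^ e) * (1 - X ^ f) * P =
      (1 - X ^ a) * (1 - X ^ b) * (1 - X ^ c)) :
    d + e + f + P.natDegree = a + b + c := by
  have hab : (1 - X ^ a) * (1 - X ^ b) ≠ (0 : R[X]) :=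
    mul_ne_zero (one_sub_X_pow_ne_zero ha) (one_sub_X_pow_ne_zero hb)
  have hne := mul_ne_zero hab (one_sub_X_pow_ne_zero (R := R) hc)
  have hdef := left_ne_zero_of_mul (hP ▸ hne)
  have hde := left_ne_zero_of_mul hdef
  have hdeg := congrArg natDegree hP
  rw [natDegree_mul hdef (right_ne_zero_of_mul (hP ▸ hne)),
    natDegree_mul hde (right_ne_zero_of_mul hdef),
    natDegree_mul (left_ne_zero_of_mul hde) (right_ne_zero_of_mul hde),
    natDegree_mul hab (one_sub_X_pow_ne_zero hc),
    natDegree_mul (one_sub_X_pow_ne_zero ha) (one_sub_X_pow_ne_zero hb)] at hdeg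
  simpa only [natDegree_one_sub_X_pow] using hdeg

section RootMultiplicity

variable {K : Type*} [Field K] {z : K}

theorem separable_one_sub_X_pow {n : ℕ} (hn : (n : K) ≠ 0) : (1 - X ^ n : K[X]).Separable :=
  (X_pow_sub_one_separable_iff.2 hn).of_dvd (by rw [← neg_sub, neg_dvd])

theorem rootMultiplicity_one_sub_X_pow [DecidableEq K] {n : ℕ} (hn : (n : K) ≠ 0) :
    (1 - X ^ n : K[X]).rootMultiplicity z = if z ^ n = 1 then 1 else 0 := by
  have hsep := separable_one_sub_X_pow hn
  have hroot : (1 - X ^ n : K[X]).IsRoot z ↔ z ^ n = 1 := by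
    rw [IsRoot.def, eval_sub, eval_one, eval_pow, eval_X, sub_eq_zero, eq_comm]
  split_ifs with hz
  · exact (rootMultiplicity_le_one_of_separable hsep z).antisymm
      ((rootMultiplicity_pos hsep.ne_zero).2 (hroot.2 hz))
  · exact rootMultiplicity_eq_zero (mt hroot.1 hz)

theorem rootMultiplicity_of_one_sub_X_pow_gcd_mul_eq [DecidableEq K] {a b c : ℕ}
    (ha : (a : K) ≠ 0) (hb : (b : K) ≠ 0) (hc : (c : K) ≠ 0) {P : K[X]}
    (hP : (1 - X ^ a.gcd b) * (1 - X ^ b.gcd c) * (1 - X ^ a.gcd c) * P =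
      (1 - X ^ a) * (1 - X ^ b) * (1 - X ^ c))
    (hz : z ^ (a.gcd b).gcd c ≠ 1) :
    P.rootMultiplicity z = if z ^ a = 1 ∨ z ^ b = 1 ∨ z ^ c = 1 then 1 else 0 := by
  have gcd_cast_ne_zero {m : ℕ} (n : ℕ) (hm : (m : K) ≠ 0) : ((m.gcd n : ℕ) : K) ≠ 0 :=
    ne_zero_of_dvd_ne_zero hm (Nat.cast_dvd_cast (m.gcd_dvd_left n))
  have hne : (1 - X ^ a) * (1 - X ^ b) * (1 - X ^ c) ≠ (0 : K[X]) :=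
    mul_ne_zero (mul_ne_zero (separable_one_sub_X_pow ha).ne_zero
      (separable_one_sub_X_pow hb).ne_zero) (separable_one_sub_X_pow hc).ne_zero
  have hmult := congrArg (rootMultiplicity z) hP
  rw [rootMultiplicity_mul (hP ▸ hne),
    rootMultiplicity_mul (left_ne_zero_of_mul (hP ▸ hne)),
    rootMultiplicity_mul (left_ne_zero_of_mul (left_ne_zero_of_mul (hP ▸ hne))),
    rootMultiplicity_mul hne, rootMultiplicity_mul (left_ne_zero_of_mul hne),
    rootMultiplicity_one_sub_X_pow (gcd_cast_ne_zero b ha),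
    rootMultiplicity_one_sub_X_pow (gcd_cast_ne_zero c hb),
    rootMultiplicity_one_sub_X_pow (gcd_cast_ne_zero c ha),
    rootMultiplicity_one_sub_X_pow ha, rootMultiplicity_one_sub_X_pow hb,
    rootMultiplicity_one_sub_X_pow hc] at hmult
  have hnot : ¬((z ^ a = 1 ∧ z ^ b = 1) ∧ z ^ c = 1) := by
    rwa [← pow_gcd_eq_one_iff, ← pow_gcd_eq_one_iff]
  simp only [pow_gcd_eq_one_iff] at hmult
  grind

theorem aeval_eq_zero_of_one_sub_X_pow_gcd_mul_eq {R : Type*} [CommRing R] [Algebra R K]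
    {a b c : ℕ} (ha : (a : K) ≠ 0) (hb : (b : K) ≠ 0) (hc : (c : K) ≠ 0) {P : R[X]}
    (hP : (1 - X ^ a.gcd b) * (1 - X ^ b.gcd c) * (1 - X ^ a.gcd c) * P =
      (1 - X ^ a) * (1 - X ^ b) * (1 - X ^ c))
    (hz : z ^ (a.gcd b).gcd c ≠ 1) (hpow : z ^ a = 1 ∨ z ^ b = 1 ∨ z ^ c = 1) :
    aeval z P = 0 := by
  classical
  have hPK := congrArg (map (algebraMap R K)) hP
  simp only [Polynomial.map_mul, Polynomial.map_sub, Polynomial.map_one, Polynomial.map_pow,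
    map_X] at hPK
  have hmult := rootMultiplicity_of_one_sub_X_pow_gcd_mul_eq ha hb hc hPK hz
  rw [if_pos hpow] at hmult
  rw [← eval_map_algebraMap]
  exact (rootMultiplicity_pos'.1 (hmult ▸ one_pos)).2

end RootMultiplicity

section StepFunction

/-- The step function equal to `c k` on `[k, k + 1)` for `k < n`, and to `0` outside `[0, n)`;
the coefficients of `P₃` as values give `h₃`. -/
noncomputable def stepFunction (c : ℕ → ℝ) (n : ℕ) (t : ℝ) : ℝ :=
  ∑ k ∈ Finset.range n, c k * (Set.Ico (k : ℝ) (k + 1)).indicator (fun _ => 1) t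

variable {E : Type*} [NormedAddCommGroup E] [NormedSpace ℝ E]

theorem intervalIntegral_indicator_Ico {a b c d : ℝ} (hac : a ≤ c) (hcd : c ≤ d) (hdb : d ≤ b)
    (f : ℝ → E) : ∫ t in a..b, (Set.Ico c d).indicator f t = ∫ t in c..d, f t := by
  rw [intervalIntegral.integral_of_le (hac.trans (hcd.trans hdb)),
    intervalIntegral.integral_of_le hcd, ← MeasureTheory.integral_Ico_eq_integral_Ioc,
    ← MeasureTheory.integral_Ico_eq_integral_Ioc,
    MeasureTheory.setIntegral_indicator measurableSet_Ico,
    Set.inter_eq_right.2 (Set.Ico_subset_Ico hac hdb)]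

theorem integral_stepFunction_smul (c : ℕ → ℝ) (n : ℕ) {f : ℝ → E}
    (hf : IntervalIntegrable f MeasureTheory.volume 0 n) :
    ∫ t in (0 : ℝ)..n, stepFunction c n t • f t =
      ∑ k ∈ Finset.range n, c k • ∫ t in (k : ℝ)..(k + 1), f t := by
  have hsmul (t : ℝ) : stepFunction c n t • f t =
      ∑ k ∈ Finset.range n, c k • (Set.Ico (k : ℝ) (k + 1)).indicator f t := by
    simp only [stepFunction, Finset.sum_smul, mul_smul, ← Set.indicator_smul_apply_left, one_smul]
  have hint (k : ℕ) : IntervalIntegrable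
      (fun t => c k • (Set.Ico (k : ℝ) (k + 1)).indicator f t) MeasureTheory.volume 0 n :=
    IntervalIntegrable.smul ⟨hf.1.indicator measurableSet_Ico, hf.2.indicator measurableSet_Ico⟩ _
  simp only [hsmul]
  rw [intervalIntegral.integral_finsetSum fun k _ => hint k]
  refine Finset.sum_congr rfl fun k hk => ?_
  have hkn : (k : ℝ) + 1 ≤ n := by exact_mod_cast Finset.mem_range.1 hk
  rw [intervalIntegral.integral_smul,
    intervalIntegral_indicator_Ico k.cast_nonneg (le_add_of_nonneg_right zero_le_one) hkn]

theorem integral_exp_mul_natCast_add_one {ω : ℂ} (hω : ω ≠ 0) (k : ℕ) :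
    ∫ t in (k : ℝ)..(k + 1), Complex.exp (ω * t) =
      Complex.exp ω ^ k * ((Complex.exp ω - 1) / ω) := by
  rw [integral_exp_mul_complex hω]
  push_cast
  rw [mul_add, mul_one, Complex.exp_add, mul_comm ω, Complex.exp_nat_mul]
  ring

theorem integral_stepFunction_mul_exp (c : ℕ → ℝ) (n : ℕ) {ω : ℂ} (hω : ω ≠ 0) :
    ∫ t in (0 : ℝ)..n, (stepFunction c n t : ℂ) * Complex.exp (ω * t) =
      (∑ k ∈ Finset.range n, (c k : ℂ) * Complex.exp ω ^ k) * ((Complex.exp ω - 1) / ω) := by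
  have hcont : Continuous fun t : ℝ => Complex.exp (ω * t) := by fun_prop
  simp only [← Complex.real_smul]
  rw [integral_stepFunction_smul c n (hcont.intervalIntegrable 0 n), Finset.sum_mul]
  simp only [integral_exp_mul_natCast_add_one hω, smul_mul_assoc]

theorem integral_stepFunction_coeff_mul_exp {P : ℤ[X]} {n : ℕ} (hn : P.natDegree < n) {ω : ℂ}
    (hω : ω ≠ 0) :
    ∫ t in (0 : ℝ)..n, (stepFunction (fun k => P.coeff k) n t : ℂ) * Complex.exp (ω * t) =
      aeval (Complex.exp ω) P * ((Complex.exp ω - 1) / ω) := by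
  rw [integral_stepFunction_mul_exp _ n hω, aeval_eq_sum_range' hn]
  simp only [zsmul_eq_mul, Complex.ofReal_intCast]

end StepFunction

theorem exp_two_pi_I_mul_div_pow_eq_one {N a : ℕ} (hN : N ≠ 0) {m : ℤ} (h : (N : ℤ) ∣ a * m) :
    Complex.exp (2 * π * Complex.I * m / N) ^ a = 1 := by
  obtain ⟨j, hj⟩ := h
  have hN' : (N : ℂ) ≠ 0 := Nat.cast_ne_zero.2 hN
  have hj' : (a : ℂ) * m = N * j := by exact_mod_cast hj
  rw [← Complex.exp_nat_mul, Complex.exp_eq_one_iff]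
  refine ⟨j, ?_⟩
  field_simp
  linear_combination hj'

/-- Let `T1, T2, T3` be positive integers with `gcd(T1,T2,T3) = 1`, let `P` be the
quotient polynomial `P_3 = (1-X^T1)(1-X^T2)(1-X^T3)/((1-X^d12)(1-X^d23)(1-X^d13))`,
`T = T1+T2+T3-d12-d23-d13+1`, and let `h_3` be the step function equal to the
coefficient `c_k` of `P_3` on `[k, k+1)` for `0 ≤ k < T` and `0` elsewhere. Then
`∫_0^T h_3(t) e^(2πimt/(T1T2T3)) dt = 0` for every nonzero integer `m` divisible by
at least one of `T1T2`, `T2T3`, `T1T3`. -/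
theorem stmt_16 (T1 T2 T3 : ℕ) (h1 : 0 < T1) (h2 : 0 < T2) (h3 : 0 < T3)
    (hgcd : Nat.gcd (Nat.gcd T1 T2) T3 = 1)
    (d12 d23 d13 : ℕ) (hd12 : d12 = Nat.gcd T1 T2) (hd23 : d23 = Nat.gcd T2 T3)
    (hd13 : d13 = Nat.gcd T1 T3)
    (P : ℤ[X])
    (hP : (1 - X ^ d12) * (1 - X ^ d23) * (1 - X ^ d13) * P =
      (1 - X ^ T1) * (1 - X ^ T2) * (1 - X ^ T3))
    (T : ℕ) (hT : T = T1 + T2 + T3 - d12 - d23 - d13 + 1)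
    (h3f : ℝ → ℝ)
    (hh3 : ∀ t : ℝ, h3f t = ∑ k ∈ Finset.range T,
      (P.coeff k : ℝ) *
        Set.indicator (Set.Ico ((k : ℝ)) ((k : ℝ) + 1)) (fun _ => (1 : ℝ)) t) :
    ∀ m : ℤ, m ≠ 0 →
      (((T1 * T2 : ℕ) : ℤ) ∣ m ∨ ((T2 * T3 : ℕ) : ℤ) ∣ m ∨ ((T1 * T3 : ℕ) : ℤ) ∣ m) →
      ∫ t in (0:ℝ)..(T : ℝ), (h3f t : ℂ) *
        Complex.exp (2 * (π : ℂ) * Complex.I * (m : ℂ) * (t : ℂ) /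
          ((T1 : ℂ) * (T2 : ℂ) * (T3 : ℂ))) = 0 := by
  intro m hm hdvd
  subst hd12 hd23 hd13
  obtain rfl : h3f = stepFunction (fun k => P.coeff k) T := funext hh3
  have hN : T1 * T2 * T3 ≠ 0 := by positivity
  set ω : ℂ := 2 * π * Complex.I * m / (T1 * T2 * T3 : ℕ) with hω
  have hω0 : ω ≠ 0 := div_ne_zero (mul_ne_zero Complex.two_pi_I_ne_zero (Int.cast_ne_zero.2 hm))
    (Nat.cast_ne_zero.2 hN)
  have hexponent (t : ℝ) : 2 * (π : ℂ) * Complex.I * m * t / (T1 * T2 * T3) = ω * t := by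
    rw [hω]; push_cast; ring
  have hdeg := add_natDegree_of_one_sub_X_pow_mul_eq h1.ne' h2.ne' h3.ne' hP
  simp only [hexponent]
  rw [integral_stepFunction_coeff_mul_exp (by lia) hω0]
  by_cases hz : Complex.exp ω = 1
  · rw [hz, sub_self, zero_div, mul_zero]
  have hpow : Complex.exp ω ^ T1 = 1 ∨ Complex.exp ω ^ T2 = 1 ∨ Complex.exp ω ^ T3 = 1 := by
    rcases hdvd with ⟨j, rfl⟩ | ⟨j, rfl⟩ | ⟨j, rfl⟩
    · exact .inr (.inr (exp_two_pi_I_mul_div_pow_eq_one hN ⟨j, by push_cast; ring⟩))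
    · exact .inl (exp_two_pi_I_mul_div_pow_eq_one hN ⟨j, by push_cast; ring⟩)
    · exact .inr (.inl (exp_two_pi_I_mul_div_pow_eq_one hN ⟨j, by push_cast; ring⟩))
  rw [aeval_eq_zero_of_one_sub_X_pow_gcd_mul_eq (Nat.cast_ne_zero.2 h1.ne')
    (Nat.cast_ne_zero.2 h2.ne') (Nat.cast_ne_zero.2 h3.ne') hP (by rwa [hgcd, pow_one]) hpow,
    zero_mul]
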